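/- arXiv:2307.07376 — 5 statements merged into one kernel-verified Lean document; each statement's English description precedes it below -/
import Mathlib

section
/- Let a, b, c, d be integers and let 𝒮_{a,b,c,d} = {(x,y,z) ∈ ℚ_p³ : v(x) ≥ a, v(y) ≥ b, v(z) ≥ c, v(xz − y²) ≥ d} (corresponding to symmetric matrices [[x,y],[y,z]]). Then vol(𝒮_{a,b,c,d}) ≤ p^{−max(d/2, b) − max(d, a+c)} + 2·max(0, d − a − c)·p^{−d − b}, where the exponents are real numbers. -/
/-!
Split the set `𝒮` according to the valuation of `x`.

* If `v x ≥ d - c`, then `v (xz) ≥ d`, hence `2 v y ≥ d`. This part lies in the product of balls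
  `v x ≥ max a (d - c)`, `v y ≥ max b ⌈d/2⌉`, `v z ≥ c`, whose volume gives the first summand
  of the bound.
* If `v x = i` with `a ≤ i < d - c`, then for fixed `x, y` the condition `v (xz - y²) ≥ d` confines
  `z` to the ball of volume `p ^ (i - d)` around `y² / x`, while `x` and `y` range over balls of
  volume `p ^ (-i)` and `p ^ (-b)`. By Fubini this part has volume at most `p ^ (-d - b)`
  (`padicHaar3_shell_le`), and there are `max 0 (d - a - c)` possible `i`.

The argument thus gives the bound even without the factor `2`. The only
measure-theoretic input besides Fubini is the volume of a ball (`padicHaar_closedBall`), which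
follows from the decomposition of a ball into `p` disjoint translates of the next smaller one.
-/

open MeasureTheory

noncomputable instance (p : ℕ) [Fact p.Prime] : MeasurableSpace ℚ_[p] := borel ℚ_[p]
instance (p : ℕ) [Fact p.Prime] : BorelSpace ℚ_[p] := ⟨rfl⟩

open scoped Classical in
/-- The additive `p`-adic valuation on `ℚ_[p]`, valued in `ℤ ∪ {∞}`, normalized by
`v p = 1` and `v 0 = ∞`. -/
noncomputable def padicV {p : ℕ} [Fact p.Prime] (x : ℚ_[p]) : WithTop ℤ :=
  if x = 0 then ⊤ else (x.valuation : WithTop ℤ)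

/-- The closed unit ball `ℤ_p` as a positive compact subset of `ℚ_p`. -/
noncomputable def unitBallCompacts (p : ℕ) [Fact p.Prime] :
    TopologicalSpace.PositiveCompacts ℚ_[p] where
  carrier := Metric.closedBall 0 1
  isCompact' := isCompact_closedBall 0 1
  interior_nonempty' := by
    refine ⟨0, ?_⟩
    exact interior_maximal Metric.ball_subset_closedBall Metric.isOpen_ball
      (Metric.mem_ball_self one_pos)

/-- The Haar measure on `ℚ_p` normalized so that `ℤ_p` has volume `1`. -/
noncomputable def padicHaar (p : ℕ) [Fact p.Prime] : Measure ℚ_[p] :=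
  Measure.addHaarMeasure (unitBallCompacts p)

/-- The Haar measure on `ℚ_p³` normalized so that `ℤ_p³` has volume `1`. -/
noncomputable def padicHaar3 (p : ℕ) [Fact p.Prime] : Measure (ℚ_[p] × ℚ_[p] × ℚ_[p]) :=
  (padicHaar p).prod ((padicHaar p).prod (padicHaar p))

section PadicVolume

variable {p : ℕ} [hp : Fact p.Prime]

lemma natCast_prime_pos : (0 : ℝ) < p := by exact_mod_cast hp.1.pos

lemma one_lt_natCast_prime : (1 : ℝ) < p := by exact_mod_cast hp.1.one_lt

lemma le_padicV_iff (n : ℤ) (x : ℚ_[p]) :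
    (n : WithTop ℤ) ≤ padicV x ↔ ‖x‖ ≤ (p : ℝ) ^ (-n) := by
  unfold padicV
  split_ifs with h
  · have := (zpow_pos (natCast_prime_pos (p := p)) (-n)).le
    simpa [h] using this
  · rw [Padic.norm_eq_zpow_neg_valuation h, zpow_le_zpow_iff_right₀ one_lt_natCast_prime]
    simp

/-! ### Haar measure of balls in `ℚ_p` -/

/-- A ball is the union of the `p` translates by `k * p ^ n` of the next smaller ball: these
are indexed by the residues modulo `p`. -/
lemma closedBall_eq_iUnion (n : ℤ) :
    Metric.closedBall (0 : ℚ_[p]) ((p : ℝ) ^ (-n)) =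
      ⋃ k : Fin p, Metric.closedBall (((k : ℕ) : ℚ_[p]) * (p : ℚ_[p]) ^ n)
        ((p : ℝ) ^ (-(n + 1))) := by
  have hp0 : (p : ℚ_[p]) ≠ 0 := by exact_mod_cast hp.1.ne_zero
  have hpR := natCast_prime_pos (p := p)
  ext x
  simp only [Metric.mem_closedBall, Set.mem_iUnion, dist_eq_norm, sub_zero]
  constructor
  · intro hx
    have hu : ‖x * (p : ℚ_[p]) ^ (-n)‖ ≤ 1 := by
      rw [norm_mul, Padic.norm_p_zpow, neg_neg]
      calc ‖x‖ * (p : ℝ) ^ n ≤ (p : ℝ) ^ (-n) * (p : ℝ) ^ n := by gcongr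
        _ = 1 := by rw [← zpow_add₀ hpR.ne']; simp
    obtain ⟨k, hk, hmem⟩ := PadicInt.exists_mem_range (p := p) ⟨_, hu⟩
    refine ⟨⟨k, hk⟩, ?_⟩
    have h1 : ‖x * (p : ℚ_[p]) ^ (-n) - k‖ < (p : ℝ) ^ (0 : ℤ) := by
      have := PadicInt.mem_nonunits.1 hmem
      rw [zpow_zero]
      exact this
    rw [Padic.norm_lt_pow_iff_norm_le_pow_sub_one] at h1
    have h2 : x - (k : ℚ_[p]) * (p : ℚ_[p]) ^ n
        = (x * (p : ℚ_[p]) ^ (-n) - k) * (p : ℚ_[p]) ^ n := by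
      rw [sub_mul, mul_assoc, ← zpow_add₀ hp0]; simp
    simp only [h2, norm_mul, Padic.norm_p_zpow]
    calc _ ≤ (p : ℝ) ^ (0 - 1 : ℤ) * (p : ℝ) ^ (-n) := by gcongr
      _ = _ := by rw [← zpow_add₀ hpR.ne']; congr 1; ring
  · rintro ⟨k, hk⟩
    have h1 : ‖((k : ℕ) : ℚ_[p]) * (p : ℚ_[p]) ^ n‖ ≤ (p : ℝ) ^ (-n) := by
      rw [norm_mul, Padic.norm_p_zpow]
      have := Padic.norm_int_le_one (p := p) ((k : ℕ) : ℤ)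
      exact mul_le_of_le_one_left (zpow_pos hpR _).le (by simpa using this)
    have h2 : (p : ℝ) ^ (-(n + 1)) ≤ (p : ℝ) ^ (-n) :=
      zpow_le_zpow_right₀ one_lt_natCast_prime.le (by omega)
    have h3 := Padic.nonarchimedean (x - ((k : ℕ) : ℚ_[p]) * (p : ℚ_[p]) ^ n)
      (((k : ℕ) : ℚ_[p]) * (p : ℚ_[p]) ^ n)
    rw [sub_add_cancel] at h3
    exact h3.trans (max_le (hk.trans h2) h1)

lemma pairwise_disjoint_closedBall (n : ℤ) :
    Pairwise (Function.onFun Disjoint fun k : Fin p =>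
      Metric.closedBall (((k : ℕ) : ℚ_[p]) * (p : ℚ_[p]) ^ n) ((p : ℝ) ^ (-(n + 1)))) := by
  intro k l hkl
  rw [Function.onFun, Set.disjoint_left]
  intro x hk hl
  apply hkl
  have hpR := natCast_prime_pos (p := p)
  rw [Metric.mem_closedBall, dist_eq_norm] at hk hl
  have h := Padic.nonarchimedean (x - ((l : ℕ) : ℚ_[p]) * (p : ℚ_[p]) ^ n)
    (-(x - ((k : ℕ) : ℚ_[p]) * (p : ℚ_[p]) ^ n))
  rw [norm_neg] at h
  have h1 : x - ((l : ℕ) : ℚ_[p]) * (p : ℚ_[p]) ^ n + -(x - ((k : ℕ) : ℚ_[p]) * (p : ℚ_[p]) ^ n)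
      = ((((k : ℕ) : ℤ) - ((l : ℕ) : ℤ) : ℤ) : ℚ_[p]) * (p : ℚ_[p]) ^ n := by
    push_cast; ring
  rw [h1, norm_mul, Padic.norm_p_zpow] at h
  have h2 := h.trans (max_le hl hk)
  have h3 : (p : ℝ) ^ (-(n + 1)) < 1 * (p : ℝ) ^ (-n) := by
    rw [one_mul]
    exact zpow_lt_zpow_right₀ one_lt_natCast_prime (by omega)
  have h4 := lt_of_mul_lt_mul_right (h2.trans_lt h3) (zpow_pos hpR _).le
  rw [Padic.norm_intCast_lt_one_iff] at h4
  have hk' := k.2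
  have hl' := l.2
  have h5 := Int.eq_zero_of_abs_lt_dvd h4 (by rw [abs_lt]; omega)
  ext
  omega

instance : (padicHaar p).IsAddHaarMeasure := by unfold padicHaar; infer_instance

lemma padicHaar_closedBall_translate (t : ℚ_[p]) (r : ℝ) :
    padicHaar p (Metric.closedBall t r) = padicHaar p (Metric.closedBall 0 r) := by
  have := measure_preimage_add (padicHaar p) (-t) (Metric.closedBall 0 r)
  rw [← this]
  congr 1
  ext x
  simp [dist_eq_norm, add_comm, sub_eq_add_neg]

lemma padicHaar_closedBall_step (n : ℤ) :
    padicHaar p (Metric.closedBall 0 ((p : ℝ) ^ (-n))) =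
      p * padicHaar p (Metric.closedBall 0 ((p : ℝ) ^ (-(n + 1)))) := by
  rw [closedBall_eq_iUnion, measure_iUnion (pairwise_disjoint_closedBall n)
    (fun _ => Metric.isClosed_closedBall.measurableSet)]
  simp [padicHaar_closedBall_translate]

lemma padicHaar_closedBall (t : ℚ_[p]) (n : ℤ) :
    padicHaar p (Metric.closedBall t ((p : ℝ) ^ (-n))) = ENNReal.ofReal ((p : ℝ) ^ (-n)) := by
  have hpR := natCast_prime_pos (p := p)
  have hpE : (p : ENNReal) ≠ 0 := by exact_mod_cast hp.1.ne_zero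
  have key : ∀ m : ℤ, ENNReal.ofReal ((p : ℝ) ^ (-m))
      = p * ENNReal.ofReal ((p : ℝ) ^ (-(m + 1))) := by
    intro m
    rw [← ENNReal.ofReal_natCast, ← ENNReal.ofReal_mul hpR.le]
    congr 1
    rw [← zpow_one_add₀ hpR.ne']
    congr 1; ring
  rw [padicHaar_closedBall_translate]
  induction n using Int.induction_on with
  | zero =>
    have := Measure.addHaarMeasure_self (K₀ := unitBallCompacts p)
    have h0 : ((unitBallCompacts p : TopologicalSpace.PositiveCompacts ℚ_[p]) : Set ℚ_[p])
        = Metric.closedBall 0 1 := rfl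
    rw [h0] at this
    simpa [padicHaar] using this
  | succ k ih =>
    rw [padicHaar_closedBall_step, key] at ih
    exact (ENNReal.mul_right_inj hpE (ENNReal.natCast_ne_top p)).1 ih
  | pred k ih =>
    rw [padicHaar_closedBall_step, key, sub_add_cancel, ih]

/-! ### Volumes of shells and boxes in `ℚ_p³` -/

/-- This bounds the part of `𝒮` with `v x = i`: for each `x` and `y`, the coordinate `z` lies in the ball of
volume `p ^ (i - d)` around `y² / x`. -/
lemma padicHaar3_shell_le (b d i : ℤ) :
    padicHaar3 p {w | ‖w.1‖ = (p : ℝ) ^ (-i) ∧ ‖w.2.1‖ ≤ (p : ℝ) ^ (-b) ∧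
      ‖w.1 * w.2.2 - w.2.1 ^ 2‖ ≤ (p : ℝ) ^ (-d)} ≤ ENNReal.ofReal ((p : ℝ) ^ (-d - b)) := by
  have hpR := natCast_prime_pos (p := p)
  have hslice : ∀ x t : ℚ_[p], ‖x‖ = (p : ℝ) ^ (-i) →
      {z | ‖x * z - t‖ ≤ (p : ℝ) ^ (-d)} ⊆ Metric.closedBall (t / x) ((p : ℝ) ^ (-(d - i))) := by
    intro x t hx z hz
    have hx0 : x ≠ 0 := by
      rw [← norm_pos_iff, hx]; exact zpow_pos hpR _
    rw [Metric.mem_closedBall, dist_eq_norm, show z - t / x = (x * z - t) / x by field_simp,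
      norm_div, hx, div_le_iff₀ (zpow_pos hpR _), ← zpow_add₀ hpR.ne']
    rwa [show -(d - i) + -i = -d by ring]
  have hmeas : ∀ x : ℚ_[p], MeasurableSet {v : ℚ_[p] × ℚ_[p] | ‖v.1‖ ≤ (p : ℝ) ^ (-b) ∧
      ‖x * v.2 - v.1 ^ 2‖ ≤ (p : ℝ) ^ (-d)} := fun x =>
    IsClosed.measurableSet <| by
      simp only [Set.ofPred_and]
      exact (isClosed_le (by fun_prop) (by fun_prop)).inter
        (isClosed_le (by fun_prop) (by fun_prop))
  have hyz : ∀ x : ℚ_[p], ‖x‖ = (p : ℝ) ^ (-i) →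
      ((padicHaar p).prod (padicHaar p)) {v : ℚ_[p] × ℚ_[p] | ‖v.1‖ ≤ (p : ℝ) ^ (-b) ∧
        ‖x * v.2 - v.1 ^ 2‖ ≤ (p : ℝ) ^ (-d)} ≤
      ENNReal.ofReal ((p : ℝ) ^ (-(d - i))) * ENNReal.ofReal ((p : ℝ) ^ (-b)) := by
    intro x hx
    refine (Measure.prod_apply_le (hmeas x)).trans ?_
    calc _ ≤ ∫⁻ y, (Metric.closedBall (0 : ℚ_[p]) ((p : ℝ) ^ (-b))).indicator
            (fun _ => ENNReal.ofReal ((p : ℝ) ^ (-(d - i)))) y ∂(padicHaar p) := by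
          refine lintegral_mono fun y => ?_
          by_cases hy : ‖y‖ ≤ (p : ℝ) ^ (-b)
          · rw [Set.indicator_of_mem (by simpa using hy), ← padicHaar_closedBall (y ^ 2 / x)]
            exact measure_mono fun z hz => hslice x (y ^ 2) hx hz.2
          · refine (measure_mono_null (t := ∅) (fun z hz => hy hz.1) measure_empty).trans_le ?_
            exact zero_le
      _ = _ := by
          rw [lintegral_indicator_const Metric.isClosed_closedBall.measurableSet,
            padicHaar_closedBall]
  refine (Measure.prod_apply_le ?_).trans ?_
  · apply IsClosed.measurableSet
    simp only [Set.ofPred_and]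
    exact (isClosed_eq (by fun_prop) (by fun_prop)).inter
      ((isClosed_le (by fun_prop) (by fun_prop)).inter
      (isClosed_le (by fun_prop) (by fun_prop)))
  calc _ ≤ ∫⁻ x, (Metric.closedBall (0 : ℚ_[p]) ((p : ℝ) ^ (-i))).indicator
          (fun _ => ENNReal.ofReal ((p : ℝ) ^ (-(d - i))) * ENNReal.ofReal ((p : ℝ) ^ (-b))) x
          ∂(padicHaar p) := by
        refine lintegral_mono fun x => ?_
        by_cases hx : ‖x‖ = (p : ℝ) ^ (-i)
        · rw [Set.indicator_of_mem (by simpa using hx.le)]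
          exact (measure_mono fun v hv => hv.2).trans (hyz x hx)
        · refine (measure_mono_null (t := ∅) (fun v hv => hx hv.1) measure_empty).trans_le ?_
          exact zero_le
    _ = _ := by
        rw [lintegral_indicator_const Metric.isClosed_closedBall.measurableSet,
          padicHaar_closedBall, ← ENNReal.ofReal_mul (zpow_pos hpR _).le,
          ← ENNReal.ofReal_mul (by positivity), ← zpow_add₀ hpR.ne', ← zpow_add₀ hpR.ne']
        congr 2; ring

lemma padicHaar3_box_le (k l m : ℤ) :
    padicHaar3 p (Metric.closedBall 0 ((p : ℝ) ^ (-k)) ×ˢ Metric.closedBall 0 ((p : ℝ) ^ (-l)) ×ˢ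
      Metric.closedBall 0 ((p : ℝ) ^ (-m))) ≤ ENNReal.ofReal ((p : ℝ) ^ (-k - l - m)) := by
  have hpR := natCast_prime_pos (p := p)
  refine (Measure.prod_prod_le _ _).trans ((mul_le_mul_right (Measure.prod_prod_le _ _) _).trans ?_)
  simp only [padicHaar_closedBall]
  rw [← ENNReal.ofReal_mul (by positivity), ← ENNReal.ofReal_mul (by positivity),
    ← zpow_add₀ hpR.ne', ← zpow_add₀ hpR.ne']
  exact le_of_eq (by congr 2; ring)

/-! ### Covering `𝒮` by one box and finitely many shells -/

/-- `2 v y ≥ d` gives `v y ≥ ⌈d/2⌉`, the latter being `(d + 1) / 2` with floor division. -/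
lemma norm_le_of_sq_norm_le (d : ℤ) (y : ℚ_[p]) (h : ‖y ^ 2‖ ≤ (p : ℝ) ^ (-d)) :
    ‖y‖ ≤ (p : ℝ) ^ (-((d + 1) / 2)) := by
  have hpR := natCast_prime_pos (p := p)
  by_cases hy : y = 0
  · simpa [hy] using (zpow_pos hpR (-((d + 1) / 2))).le
  · rw [norm_pow, Padic.norm_eq_zpow_neg_valuation hy, ← zpow_natCast, ← zpow_mul,
      zpow_le_zpow_iff_right₀ one_lt_natCast_prime] at h
    rw [Padic.norm_eq_zpow_neg_valuation hy, zpow_le_zpow_iff_right₀ one_lt_natCast_prime]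
    push_cast at h
    omega

/-- The box contains the points with `v x ≥ d - c` (including `x = 0`), the `i`-th shell those
with `v x = i`. -/
lemma subset_box_union_shells (a b c d : ℤ) :
    {w : ℚ_[p] × ℚ_[p] × ℚ_[p] |
        (a : WithTop ℤ) ≤ padicV w.1 ∧ (b : WithTop ℤ) ≤ padicV w.2.1 ∧
        (c : WithTop ℤ) ≤ padicV w.2.2 ∧
        (d : WithTop ℤ) ≤ padicV (w.1 * w.2.2 - w.2.1 ^ 2)} ⊆
      (Metric.closedBall 0 ((p : ℝ) ^ (-(max a (d - c)))) ×ˢ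
        Metric.closedBall 0 ((p : ℝ) ^ (-(max b ((d + 1) / 2)))) ×ˢ
        Metric.closedBall 0 ((p : ℝ) ^ (-c))) ∪
      ⋃ i ∈ Finset.Ico a (d - c), {w | ‖w.1‖ = (p : ℝ) ^ (-i) ∧ ‖w.2.1‖ ≤ (p : ℝ) ^ (-b) ∧
        ‖w.1 * w.2.2 - w.2.1 ^ 2‖ ≤ (p : ℝ) ^ (-d)} := by
  have hpR := natCast_prime_pos (p := p)
  rintro ⟨x, y, z⟩ ⟨hx, hy, hz, hd⟩
  simp only [le_padicV_iff] at hx hy hz hd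
  by_cases hxc : ‖x‖ ≤ (p : ℝ) ^ (-(d - c))
  · left
    have hxz : ‖x * z‖ ≤ (p : ℝ) ^ (-d) := by
      rw [norm_mul]
      calc ‖x‖ * ‖z‖ ≤ (p : ℝ) ^ (-(d - c)) * (p : ℝ) ^ (-c) := by gcongr
        _ = _ := by rw [← zpow_add₀ hpR.ne']; congr 1; ring
    have hyd : ‖y ^ 2‖ ≤ (p : ℝ) ^ (-d) := by
      have h := Padic.nonarchimedean (x * z) (-(x * z - y ^ 2))
      rw [norm_neg, show x * z + -(x * z - y ^ 2) = y ^ 2 by ring] at h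
      exact h.trans (max_le hxz hd)
    have hy' := norm_le_of_sq_norm_le d y hyd
    simp only [Set.mem_prod, Metric.mem_closedBall, dist_zero_right]
    refine ⟨?_, ?_, hz⟩
    · rcases max_choice a (d - c) with h | h <;> rw [h] <;> assumption
    · rcases max_choice b ((d + 1) / 2) with h | h <;> rw [h] <;> assumption
  · right
    have hx0 : x ≠ 0 := by
      rintro rfl
      exact hxc (by simpa using (zpow_pos hpR (-(d - c))).le)
    have hxv := Padic.norm_eq_zpow_neg_valuation hx0
    rw [hxv, zpow_le_zpow_iff_right₀ one_lt_natCast_prime] at hx hxc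
    simp only [Set.mem_iUnion, Finset.mem_Ico]
    exact ⟨x.valuation, ⟨by omega, by omega⟩, hxv, hy, hd⟩

end PadicVolume

/-- For integers `a, b, c, d`, the volume of
`𝒮_{a,b,c,d} = {(x,y,z) : v x ≥ a, v y ≥ b, v z ≥ c, v (xz - y²) ≥ d}` is at most
`p^(-max(d/2, b) - max(d, a+c)) + 2 max(0, d-a-c) p^(-d-b)`. -/
theorem volume_S_abcd_le (p : ℕ) [Fact p.Prime] (a b c d : ℤ) :
    padicHaar3 p {w : ℚ_[p] × ℚ_[p] × ℚ_[p] |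
        (a : WithTop ℤ) ≤ padicV w.1 ∧ (b : WithTop ℤ) ≤ padicV w.2.1 ∧
        (c : WithTop ℤ) ≤ padicV w.2.2 ∧
        (d : WithTop ℤ) ≤ padicV (w.1 * w.2.2 - w.2.1 ^ 2)} ≤
      ENNReal.ofReal ((p : ℝ) ^ (-(max ((d : ℝ) / 2) (b : ℝ)) - max (d : ℝ) ((a : ℝ) + (c : ℝ)))
        + 2 * max 0 ((d : ℝ) - (a : ℝ) - (c : ℝ)) * (p : ℝ) ^ (-(d : ℝ) - (b : ℝ))) := by
  have hpR := natCast_prime_pos (p := p)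
  have hp1 := one_lt_natCast_prime (p := p)
  refine (measure_mono (subset_box_union_shells a b c d)).trans ?_
  refine (measure_union_le _ _).trans ?_
  refine (add_le_add (padicHaar3_box_le _ _ _) ((measure_biUnion_finset_le _ _).trans
    (Finset.sum_le_sum fun i _ => padicHaar3_shell_le b d i))).trans ?_
  rw [Finset.sum_const, Int.card_Ico, ← ENNReal.ofReal_nsmul,
    ← ENNReal.ofReal_add (by positivity) (by positivity)]
  apply ENNReal.ofReal_le_ofReal
  have hcard : (((d - c - a).toNat : ℕ) : ℝ) = max 0 ((d : ℝ) - a - c) := by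
    rw [← Int.cast_natCast, Int.toNat_eq_max]
    push_cast
    rw [max_comm]
    congr 1; ring
  have hrpow : (p : ℝ) ^ (-d - b) = (p : ℝ) ^ (-(d : ℝ) - (b : ℝ)) := by
    rw [← Real.rpow_intCast]; push_cast; rfl
  rw [nsmul_eq_mul, hcard, hrpow]
  refine add_le_add ?_ ?_
  · rw [← Real.rpow_intCast]
    apply Real.rpow_le_rpow_of_exponent_le hp1.le
    have h1 : (d : ℝ) / 2 ≤ (((d + 1) / 2 : ℤ) : ℝ) := by
      have : d ≤ 2 * ((d + 1) / 2) := by omega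
      have : (d : ℝ) ≤ 2 * (((d + 1) / 2 : ℤ) : ℝ) := by exact_mod_cast this
      linarith
    have h2 : max ((d : ℝ) / 2) b ≤ ((max b ((d + 1) / 2) : ℤ) : ℝ) := by
      push_cast [Int.cast_max]
      exact max_le (h1.trans (le_max_right _ _)) (le_max_left _ _)
    have h3 : max (d : ℝ) (a + c) = ((max a (d - c) : ℤ) : ℝ) + c := by
      rw [← Int.cast_add a c, ← Int.cast_max, ← Int.cast_add]
      congr 1
      omega
    rw [h3, Int.cast_sub, Int.cast_sub, Int.cast_neg]
    linarith
  · gcongr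
    linarith [le_max_left (0 : ℝ) ((d : ℝ) - a - c)]
end

section
/- For every real number k > 0 and every real x ≥ x_k, one has g_k(x) ≤ g_k(x_k) · exp(−π·(x − x_k)²/(x + x_k)). -/
/-!
Write `a = xk k`, so that `k = 4 π a`. After taking logarithms and putting `u = x / a ≥ 1`, the
claim is `2 log u ≤ (u - 1) (u + 3) / (u + 1)`. It follows from `y ≤ sinh y` at `y = log u`, that
is `2 log u ≤ u - 1 / u = (u - 1) (u + 1) / u`, because `(u + 1) / u ≤ (u + 3) / (u + 1)` for
`u ≥ 1`.
-/

open Real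

/-- `g_k (x) = x^(k/2) exp (-2 π x)`. -/
noncomputable def g (k x : ℝ) : ℝ := x ^ (k / 2) * Real.exp (-2 * Real.pi * x)

/-- `x_k = k / (4 π)`. -/
noncomputable def xk (k : ℝ) : ℝ := k / (4 * Real.pi)

/-- The logarithmic form of the bound, divided by `π`, with `a` in the role of `xk k`. -/
lemma two_mul_log_sub_log_le {a x : ℝ} (ha : 0 < a) (hx : a ≤ x) :
    2 * a * (log x - log a) ≤ 2 * (x - a) - (x - a) ^ 2 / (x + a) := by
  have hx0 : 0 < x := ha.trans_le hx
  have hu : 1 ≤ x / a := (one_le_div ha).2 hx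
  have h := Real.self_le_sinh_iff.2 (Real.log_nonneg hu)
  rw [Real.sinh_log (by positivity), Real.log_div hx0.ne' ha.ne'] at h
  have h2 : 2 * a * (log x - log a) ≤ 2 * a * ((x / a - (x / a)⁻¹) / 2) := by gcongr
  refine h2.trans ?_
  have key : 2 * (x - a) - (x - a) ^ 2 / (x + a) - 2 * a * ((x / a - (x / a)⁻¹) / 2)
      = a * (x - a) ^ 2 / (x * (x + a)) := by
    field_simp
    ring
  have : 0 ≤ a * (x - a) ^ 2 / (x * (x + a)) := by positivity
  linarith

/-- For `k > 0` and `x ≥ x_k`,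
`g_k x ≤ g_k x_k * exp (-π (x - x_k)² / (x + x_k))`. -/
theorem g_le_of_ge_xk (k : ℝ) (hk : 0 < k) (x : ℝ) (hx : xk k ≤ x) :
    g k x ≤ g k (xk k) * Real.exp (-Real.pi * (x - xk k) ^ 2 / (x + xk k)) := by
  have ha : 0 < xk k := by unfold xk; positivity
  have hk2 : k / 2 = 2 * π * xk k := by unfold xk; field_simp; ring
  have h := mul_le_mul_of_nonneg_left (two_mul_log_sub_log_le ha hx) pi_pos.le
  unfold g
  rw [hk2, rpow_def_of_pos (ha.trans_le hx), rpow_def_of_pos ha, ← exp_add, ← exp_add, ← exp_add,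
    exp_le_exp, mul_div_assoc]
  linarith
end

section
/- There exists a real number k₀ ≥ 1 such that for every real k ≥ k₀ and every real x > 0 with |x − x_k| ≥ √k · log k, one has g_k(x) ≤ k^{−100} · g_k(x_k). -/
/-!
Write `x = s² x_k` with `s > 0`. Then
`log (g_k x / g_k x_k) = (k/2) (log s² - s² + 1) ≤ -(k/2) (s - 1)²`,
because `log s² = 2 log s ≤ 2 (s - 1)`. The hypothesis on `x` reads
`|s² - 1| ≥ 4π log k / √k`, hence `k (s² - 1)² ≥ 144 (log k)²`. If `s² ≤ 2`, dividing by
`(s + 1)² ≤ 6` bounds `k (s - 1)²` below by `24 (log k)²`; if `s² > 2`, then `s - 1 ≥ 2/5`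
and `k ≥ 144 (log k)²` for large `k` gives a bound of the same order. Both exceed
`200 log k` once `log k ≥ 100`.
-/

open Real

/-- The elementary inequality behind the decay, with `s = √(x / x_k)` and `L = log k`. -/
lemma two_hundred_mul_le {k L s : ℝ} (hs : 0 < s) (hL : 100 ≤ L) (hk : 144 * L ^ 2 ≤ k)
    (h : 144 * L ^ 2 ≤ k * (s ^ 2 - 1) ^ 2) : 200 * L ≤ k * (s - 1) ^ 2 := by
  have hk0 : 0 ≤ k := le_trans (by positivity) hk
  have hnn : 0 ≤ k * (s - 1) ^ 2 := by positivity
  have hLL : 100 * L ≤ L ^ 2 := by nlinarith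
  rcases le_total (s ^ 2) 2 with h2 | h2
  · have h6 : (s + 1) ^ 2 ≤ 6 := by nlinarith [sq_nonneg (s - 1)]
    have he : k * (s ^ 2 - 1) ^ 2 = k * (s - 1) ^ 2 * (s + 1) ^ 2 := by ring
    have := mul_le_mul_of_nonneg_left h6 hnn
    linarith
  · have h3 : 2 / 5 ≤ s - 1 := by nlinarith
    have h4 : (2 / 5 : ℝ) ^ 2 ≤ (s - 1) ^ 2 := by gcongr
    have := mul_le_mul_of_nonneg_left h4 hk0
    linarith

lemma g_eq_exp {k x : ℝ} (hx : 0 < x) :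
    g k x = Real.exp (k / 2 * Real.log x - 2 * Real.pi * x) := by
  rw [g, Real.rpow_def_of_pos hx, ← Real.exp_add]
  congr 1
  ring

/-- There is `k₀ ≥ 1` such that for all `k ≥ k₀` and all `x > 0` with
`|x - x_k| ≥ √k log k`, one has `g_k x ≤ k^(-100) g_k x_k`. -/
theorem g_le_rpow_neg_hundred :
    ∃ k₀ : ℝ, 1 ≤ k₀ ∧ ∀ k : ℝ, k₀ ≤ k → ∀ x : ℝ, 0 < x →
      Real.sqrt k * Real.log k ≤ |x - xk k| →
      g k x ≤ k ^ (-100 : ℝ) * g k (xk k) := by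
  have hlog : ∀ᶠ k : ℝ in Filter.atTop, Real.log k ≤ 1 / 12 * k ^ (1 / 2 : ℝ) := by
    have h := (isLittleO_log_rpow_atTop (r := 1 / 2) (by norm_num)).bound
      (c := 1 / 12) (by norm_num)
    filter_upwards [h, Filter.eventually_ge_atTop 0] with k hk hk0
    rw [Real.norm_eq_abs, Real.norm_of_nonneg (by positivity)] at hk
    exact (le_abs_self _).trans hk
  obtain ⟨K, hK⟩ := Filter.eventually_atTop.1
    (hlog.and (Real.tendsto_log_atTop.eventually_ge_atTop 100))
  refine ⟨max K 1, le_max_right _ _, fun k hk x hx hd => ?_⟩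
  obtain ⟨h1, hL⟩ := hK k ((le_max_left _ _).trans hk)
  have hk0 : 0 < k := lt_of_lt_of_le one_pos ((le_max_right _ _).trans hk)
  rw [← Real.sqrt_eq_rpow] at h1
  have hsq : Real.sqrt k ^ 2 = k := Real.sq_sqrt hk0.le
  have hpi := Real.pi_gt_three
  have ha : 0 < xk k := by unfold xk; positivity
  have hak : 4 * Real.pi * xk k = k := by unfold xk; field_simp
  have hkL : 144 * Real.log k ^ 2 ≤ k := by
    nlinarith [Real.sqrt_nonneg k]
  obtain ⟨s, hs, hxs⟩ : ∃ s : ℝ, 0 < s ∧ x = s ^ 2 * xk k := by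
    refine ⟨Real.sqrt (x / xk k), by positivity, ?_⟩
    rw [Real.sq_sqrt (by positivity)]
    field_simp
  have hdev : 144 * Real.log k ^ 2 ≤ k * (s ^ 2 - 1) ^ 2 := by
    have h2 : k * Real.log k ^ 2 ≤ xk k ^ 2 * (s ^ 2 - 1) ^ 2 := by
      have h3 : (Real.sqrt k * Real.log k) ^ 2 ≤ |x - xk k| ^ 2 := by gcongr
      rw [sq_abs, mul_pow, hsq, hxs] at h3
      linarith
    have h12 : 12 * xk k ≤ k := by nlinarith
    have h144 : 144 * xk k ^ 2 ≤ k ^ 2 := by nlinarith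
    have h5 := mul_le_mul_of_nonneg_right h144 (sq_nonneg (s ^ 2 - 1))
    refine le_of_mul_le_mul_left ?_ hk0
    linarith
  have hmain := two_hundred_mul_le hs hL hkL hdev
  have hls := Real.log_le_sub_one_of_pos hs
  rw [g_eq_exp hx, g_eq_exp ha, Real.rpow_def_of_pos hk0, ← Real.exp_add, Real.exp_le_exp,
    hxs, Real.log_mul (by positivity) ha.ne', Real.log_pow]
  have e1 : 2 * Real.pi * (s ^ 2 * xk k) = k / 2 * s ^ 2 := by
    linear_combination (s ^ 2 / 2) * hak
  have e2 : 2 * Real.pi * xk k = k / 2 := by linarith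
  rw [e1, e2]
  push_cast
  have := mul_le_mul_of_nonneg_left hls hk0.le
  linarith
end

section
/- For every real number k > 0 and every real x ≥ 2·x_k, one has g_k(x) ≤ exp(−(π/3)·(x − x_k)) · g_k(x_k). -/
/-!
With `a = x_k` one has `k / 2 = 2 π a`. Writing `x = t a` with `t ≥ 2` and taking logarithms, the
claim becomes `log t ≤ (5 / 6) (t - 1)`. This follows from the tangent-line bound
`log (t / 2) ≤ t / 2 - 1` together with `log 2 < 5 / 6`, which gives
the case `t = 2`, and `1 / 2 < 5 / 6`, which compares the slopes for `t ≥ 2`.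
-/

open Real

theorem log_le_five_sixths {t : ℝ} (ht : 2 ≤ t) : Real.log t ≤ 5 / 6 * (t - 1) := by
  have h1 : Real.log (t / 2) ≤ t / 2 - 1 := Real.log_le_sub_one_of_pos (by linarith)
  rw [Real.log_div (by linarith) two_ne_zero] at h1
  linarith [Real.log_two_lt_d9]

/-- For `k > 0` and `x ≥ 2 x_k`,
`g_k x ≤ exp (-(π/3) (x - x_k)) * g_k x_k`. -/
theorem g_le_of_ge_two_xk (k : ℝ) (hk : 0 < k) (x : ℝ) (hx : 2 * xk k ≤ x) :
    g k x ≤ Real.exp (-(Real.pi / 3) * (x - xk k)) * g k (xk k) := by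
  have ha : 0 < xk k := div_pos hk (by positivity)
  have hka : k / 2 = 2 * Real.pi * xk k := by
    unfold xk
    field_simp
    ring
  unfold g
  rw [hka]
  generalize xk k = a at *
  have hx0 : 0 < x := by linarith
  have hlog := log_le_five_sixths ((le_div_iff₀ ha).2 hx)
  rw [Real.log_div hx0.ne' ha.ne'] at hlog
  have hpa : 0 ≤ 2 * Real.pi * a := by positivity
  have hmul := mul_le_mul_of_nonneg_left hlog hpa
  have hxa : 2 * Real.pi * a * (5 / 6 * (x / a - 1)) = 5 / 3 * Real.pi * (x - a) := by
    field_simp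
    ring
  rw [Real.rpow_def_of_pos hx0, Real.rpow_def_of_pos ha, ← Real.exp_add, ← Real.exp_add,
    ← Real.exp_add]
  apply Real.exp_le_exp.2
  linarith
end

section
/- Let k > 1 be a real number such that 4π·log(k) < √k (so that x_k − √k·log k > 0). Then g_k(x_k − √k·log k) ≤ exp(−4π²·(log k)²) · g_k(x_k). -/
/-!
With `t = 4π log k / √k ∈ (0, 1)` one has `x_k - √k log k = x_k (1 - t)`, so
`g_k (x_k - √k log k) / g_k (x_k) = exp ((k / 2) (log (1 - t) + t))`.
Truncating the series of `log (1 - t)` after two terms gives `log (1 - t) + t ≤ -t² / 2`, and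
`(k / 2) (t² / 2) = 4π² (log k)²`.
-/

open Real

lemma log_one_sub_le {t : ℝ} (h0 : 0 ≤ t) (h1 : t < 1) :
    Real.log (1 - t) ≤ -t - t ^ 2 / 2 := by
  have hs := Real.hasSum_pow_div_log_of_abs_lt_one (abs_lt.2 ⟨by linarith, h1⟩ : |t| < 1)
  have := sum_le_hasSum (Finset.range 2) (fun n _ => by positivity) hs
  norm_num [Finset.sum_range_succ] at this
  linarith

/-- For real `k > 1` with `4 π log k < √k`,
`g_k (x_k - √k log k) ≤ exp (-4 π² (log k)²) * g_k x_k`. -/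
theorem g_at_xk_sub_sqrt_log_le (k : ℝ) (hk : 1 < k)
    (h : 4 * Real.pi * Real.log k < Real.sqrt k) :
    g k (xk k - Real.sqrt k * Real.log k) ≤
      Real.exp (-4 * Real.pi ^ 2 * Real.log k ^ 2) * g k (xk k) := by
  have hpi := Real.pi_pos
  have hL : 0 < Real.log k := Real.log_pos hk
  have hs : 0 < Real.sqrt k := Real.sqrt_pos.2 (by linarith)
  have hsq : Real.sqrt k ^ 2 = k := Real.sq_sqrt (by linarith)
  have hx : 0 < xk k := by unfold xk; positivity
  obtain ⟨t, ht⟩ : ∃ t, t = 4 * Real.pi * Real.log k / Real.sqrt k := ⟨_, rfl⟩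
  have ht0 : 0 ≤ t := by rw [ht]; positivity
  have ht1 : t < 1 := by rw [ht, div_lt_one hs]; exact h
  have hts : t * Real.sqrt k = 4 * Real.pi * Real.log k := by rw [ht]; field_simp
  have hxk : 4 * Real.pi * xk k = k := by unfold xk; field_simp
  have hkt : k * t = 4 * Real.pi * (Real.sqrt k * Real.log k) := by
    linear_combination Real.sqrt k * hts - t * hsq
  have hkt2 : k * t ^ 2 = 16 * Real.pi ^ 2 * Real.log k ^ 2 := by
    linear_combination (t * Real.sqrt k + 4 * Real.pi * Real.log k) * hts - t ^ 2 * hsq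
  have hy : xk k - Real.sqrt k * Real.log k = xk k * (1 - t) := by
    apply mul_left_cancel₀ (by positivity : 4 * Real.pi ≠ 0)
    linear_combination hkt + t * hxk
  have hlog := log_one_sub_le ht0 ht1
  rw [hy]
  unfold g
  rw [Real.mul_rpow hx.le (by linarith), Real.rpow_def_of_pos (by linarith : 0 < 1 - t),
    mul_assoc, ← Real.exp_add, mul_left_comm (Real.exp _), ← Real.exp_add]
  refine mul_le_mul_of_nonneg_left (Real.exp_le_exp.2 ?_) (Real.rpow_nonneg hx.le _)
  have hm := mul_le_mul_of_nonneg_right hlog (by linarith : 0 ≤ k / 2)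
  have e : -2 * Real.pi * (xk k * (1 - t)) = -2 * Real.pi * xk k + k * t / 2 := by
    linear_combination t / 2 * hxk
  rw [e]
  linarith
end
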